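/- Under these hypotheses, there is a unique k-linear map ε : Hom_A(J, A) → k such that (1_A ⊗ ε)(u) = 1 in A, where u ∈ A ⊗[k] Hom_A(J, A) is the unique element corresponding to the inclusion J ↪ A ⊗[k] A under the bijective A-linear map m : A ⊗[k] Hom_A(J,A) → Hom_A(J, A ⊗[k] A) given by m(a ⊗ λ)(e) = a ⊗ λ(e) (here A ⊗[k] A is an A-module via the second factor). Moreover this ε satisfies ε((1⊗φ)|_J) = φ(1) for every φ ∈ A^∨ = Hom_k(A,k). -/

import Mathlib

open TensorProduct

noncomputable section

variable (k A : Type*) [CommRing k] [CommRing A] [Algebra k A]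

/-- `I`, the kernel of the multiplication map `μ : A ⊗[k] A → A`, as an ideal of `A ⊗[k] A`. -/
def Imul : Ideal (A ⊗[k] A) := RingHom.ker (Algebra.TensorProduct.lmul' k (S := A))

/-- `J = Ann_{A ⊗[k] A}(I)`, the annihilator of `I`.  Via the instance
`Algebra A (A ⊗[k] A)` given by `a ↦ a ⊗ 1`, the ideal `J` is an `A`-module. -/
def Jann : Ideal (A ⊗[k] A) := Submodule.annihilator (Imul k A)

/-- The `k`-linear map `1 ⊗ φ : A ⊗[k] A → A`, `a ⊗ b ↦ φ(b)·a`. -/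
def oneTensorMap (φ : Module.Dual k A) : A ⊗[k] A →ₗ[k] A :=
  TensorProduct.lift (LinearMap.flip ((LinearMap.lsmul k A).comp φ))

/-- Evaluation at `x ∈ J` as a `k`-linear map `Hom_A(J, A) → A`. -/
def evalAt (x : ↥(Jann k A)) : (↥(Jann k A) →ₗ[A] A) →ₗ[k] A where
  toFun l := l x
  map_add' l l' := rfl
  map_smul' c l := rfl

/-! As an `A`-module, `J` is a direct summand of `A ⊗[k] A` and has rank one: the sequence
`0 → I → A ⊗[k] A → A → 0` splits over `A`, so `I` is projective and
`0 → J → A ⊗[k] A → I → 0`, given by multiplication by a generator of `I`, splits as well. Being a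
direct summand makes `φ ↦ (1 ⊗ φ)|_J` a surjection `A^∨ → Hom_A(J, A)`; having rank one
gives `l x • y = l y • x` for `l ∈ Hom_A(J, A)` and `x, y ∈ J`, and `∑ᵢ (1 ⊗ φᵢ)(xᵢ) = 1` for
some `φᵢ ∈ A^∨` and `xᵢ ∈ J`.

Together with `(1 ⊗ a) x = (a ⊗ 1) x` for `x ∈ J`, these identities show that every element of `J`
is symmetric under the swap of the two tensor factors, in the sense that `1 ⊗ φ` and `φ ⊗ 1` agree
on it. Therefore `(φ ⊗ 1)(u) = (1 ⊗ φ)|_J`, so that `(1 ⊗ ε)(u) = 1` forces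
`ε ((1 ⊗ φ)|_J) = φ ((1 ⊗ ε)(u)) = φ 1`, which determines `ε`. The functional
`l ↦ ∑ᵢ φᵢ (l xᵢ)` satisfies `(1 ⊗ ε)(u) = 1`. -/

section RankOne

open Module

variable {R M : Type*} [CommRing R] [AddCommGroup M] [Module R M]

theorem dual_apply_smul_comm_of_linearEquiv (e : M ≃ₗ[R] R) (f : Dual R M) (x y : M) :
    f x • y = f y • x := by
  have smul_generator (z : M) : e z • e.symm 1 = z := by
    rw [← map_smul, smul_eq_mul, mul_one, e.symm_apply_apply]
  rw [← smul_generator x, ← smul_generator y]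
  simp only [map_smul, smul_eq_mul]
  module

variable [Module.Finite R M]

theorem dual_apply_smul_comm_of_rankAtStalk_eq_one [Flat R M]
    (h : ∀ p : PrimeSpectrum R, rankAtStalk M p = 1) (f : Dual R M) (x y : M) :
    f x • y = f y • x := by
  refine eq_of_localization_maximal (fun (P : Ideal R) _ ↦ LocalizedModule P.primeCompl M)
    (fun P _ ↦ LocalizedModule.mkLinearMap P.primeCompl M) _ _ fun P _ ↦ ?_
  let ι := LocalizedModule.mkLinearMap P.primeCompl M
  let fP : Dual (Localization P.primeCompl) (LocalizedModule P.primeCompl M) :=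
    LinearMap.extendScalarsOfIsLocalization P.primeCompl _ <|
      IsLocalizedModule.map P.primeCompl ι (Algebra.linearMap R (Localization P.primeCompl)) f
  have fP_apply (z : M) : fP (ι z) = algebraMap R (Localization P.primeCompl) (f z) :=
    IsLocalizedModule.map_apply ..
  have : Free (Localization P.primeCompl) (LocalizedModule P.primeCompl M) :=
    free_of_flat_of_isLocalRing
  obtain ⟨e⟩ := nonempty_linearEquiv_of_finrank_eq_one (h ⟨P, inferInstance⟩)
  have key := dual_apply_smul_comm_of_linearEquiv e.symm fP (ι x) (ι y)
  simpa only [fP_apply, algebraMap_smul, ← map_smul] using key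

theorem range_contractLeft_smul_top [Projective R M] :
    LinearMap.range (contractLeft R M) • (⊤ : Submodule R M) = ⊤ := by
  refine eq_top_iff.mpr fun x _ ↦ ?_
  have dualTensorHom_apply_mem (t : Dual R M ⊗[R] M) :
      dualTensorHom R M M t x ∈ LinearMap.range (contractLeft R M) • (⊤ : Submodule R M) := by
    induction t with
    | zero => simp
    | tmul f y => exact Submodule.smul_mem_smul ⟨f ⊗ₜ x, contractLeft_apply f x⟩ trivial
    | add s t hs ht => simpa using add_mem hs ht
  obtain ⟨t, ht⟩ := (dualTensorHom_bijective (R := R) (M := M) (N := M)).2 LinearMap.id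
  simpa [ht] using dualTensorHom_apply_mem t

theorem contractLeft_surjective_of_rankAtStalk_pos [Projective R M]
    (h : ∀ p : PrimeSpectrum R, 0 < rankAtStalk M p) :
    Function.Surjective (contractLeft R M) := by
  rw [← LinearMap.range_eq_top]
  by_contra hT
  set T : Ideal R := LinearMap.range (contractLeft R M)
  obtain ⟨P, hP, hTP⟩ := Ideal.exists_le_maximal T hT
  obtain ⟨r, hrT, hr⟩ := Submodule.exists_sub_one_mem_and_smul_eq_zero_of_fg_of_le_smul T ⊤
    Module.Finite.fg_top (range_contractLeft_smul_top (R := R) (M := M)).ge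
  have hP_support : (⟨P, hP.isPrime⟩ : PrimeSpectrum R) ∈ support R M :=
    (rankAtStalk_pos_iff_mem_support _).mp (h _)
  have hrP : r ∈ P := by
    rw [mem_support_iff_of_finite] at hP_support
    exact hP_support (mem_annihilator.mpr fun x ↦ hr x trivial)
  exact hP.ne_top <| (Ideal.eq_top_iff_one P).mpr <| by
    simpa using P.sub_mem hrP (hTP hrT)

theorem exists_sum_dual_apply_eq_one_of_rankAtStalk_pos [Projective R M]
    (h : ∀ p : PrimeSpectrum R, 0 < rankAtStalk M p) :
    ∃ (n : ℕ) (f : Fin n → Dual R M) (x : Fin n → M), ∑ i, f i (x i) = 1 := by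
  obtain ⟨t, ht⟩ := contractLeft_surjective_of_rankAtStalk_pos h 1
  obtain ⟨n, f, x, rfl⟩ := TensorProduct.exists_sum_tmul_eq t
  exact ⟨n, f, x, by simpa using ht⟩

end RankOne

section ShortExact

open Module

variable {R M N P : Type*} [CommRing R] [AddCommGroup M] [AddCommGroup N] [AddCommGroup P]
  [Module R M] [Module R N] [Module R P] [Projective R P] {f : M →ₗ[R] N} {g : N →ₗ[R] P}

theorem exists_comp_eq_id_of_exact (hfg : Function.Exact f g) (hf : Function.Injective f)
    (hg : Function.Surjective g) : ∃ l : N →ₗ[R] M, l ∘ₗ f = LinearMap.id :=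
  ((hfg.split_tfae'.out 0 1 :).mp ⟨hf, projective_lifting_property g .id hg⟩).2

theorem finite_of_exact_of_projective [Module.Finite R N] (hfg : Function.Exact f g)
    (hf : Function.Injective f) (hg : Function.Surjective g) : Module.Finite R M := by
  obtain ⟨l, hl⟩ := exists_comp_eq_id_of_exact hfg hf hg
  exact .of_surjective l (LinearMap.surjective_of_comp_eq_id f l hl)

theorem projective_of_exact_of_projective [Projective R N] (hfg : Function.Exact f g)
    (hf : Function.Injective f) (hg : Function.Surjective g) : Projective R M := by
  obtain ⟨l, hl⟩ := exists_comp_eq_id_of_exact hfg hf hg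
  exact .of_split f l hl

theorem rankAtStalk_eq_add_of_exact [Module.Finite R M] [Flat R M] [Module.Finite R P]
    (hfg : Function.Exact f g) (hf : Function.Injective f) (hg : Function.Surjective g) :
    rankAtStalk (R := R) N = rankAtStalk M + rankAtStalk P := by
  obtain ⟨e, -⟩ := (hfg.split_tfae'.out 0 2 :).mp ⟨hf, projective_lifting_property g .id hg⟩
  rw [rankAtStalk_eq_of_equiv e, rankAtStalk_prod]

end ShortExact

section Ideals

theorem exact_Imul_subtype_lmul'' :
    Function.Exact ((Imul k A).subtype.restrictScalars A)
      (Algebra.TensorProduct.lmul'' k (S := A)).toLinearMap := by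
  exact fun x ↦ ⟨fun hx ↦ ⟨⟨x, hx⟩, rfl⟩, by rintro ⟨y, rfl⟩; exact y.2⟩

theorem lmul''_surjective :
    Function.Surjective (Algebra.TensorProduct.lmul'' k (S := A)).toLinearMap :=
  fun a ↦ ⟨a ⊗ₜ 1, by simp [Algebra.TensorProduct.lmul'']⟩

instance finite_Imul [Module.Finite k A] : Module.Finite A (Imul k A) :=
  finite_of_exact_of_projective (exact_Imul_subtype_lmul'' k A) Subtype.val_injective
    (lmul''_surjective k A)

instance projective_Imul [Module.Projective k A] : Module.Projective A (Imul k A) :=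
  projective_of_exact_of_projective (exact_Imul_subtype_lmul'' k A) Subtype.val_injective
    (lmul''_surjective k A)

variable {k A}

theorem toSpanSingleton_Imul_surjective {f : Imul k A}
    (hf : Imul k A = Ideal.span {(f : A ⊗[k] A)}) :
    Function.Surjective (LinearMap.toSpanSingleton (A ⊗[k] A) (Imul k A) f) := by
  rintro ⟨x, hx⟩
  obtain ⟨c, hc⟩ := Ideal.mem_span_singleton'.mp (hf.le hx)
  exact ⟨c, Subtype.ext hc⟩

theorem exact_Jann_subtype_toSpanSingleton {f : Imul k A}
    (hf : Imul k A = Ideal.span {(f : A ⊗[k] A)}) :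
    Function.Exact (Jann k A).subtype (LinearMap.toSpanSingleton (A ⊗[k] A) (Imul k A) f) := by
  have hJ : Jann k A = (Ideal.span {(f : A ⊗[k] A)}).annihilator :=
    congrArg Submodule.annihilator hf
  have mem_Jann_iff (x : A ⊗[k] A) : x ∈ Jann k A ↔ x * f = 0 := by
    rw [hJ]
    exact Submodule.mem_annihilator_span_singleton _ _
  intro x
  simp [mem_Jann_iff, Subtype.ext_iff]

theorem exists_exact_Jann_Imul (hI : (Imul k A).IsPrincipal) :
    ∃ g : A ⊗[k] A →ₗ[A] Imul k A,
      Function.Exact ((Jann k A).subtype.restrictScalars A) g ∧ Function.Surjective g := by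
  obtain ⟨f, hf⟩ := hI
  have hfI : f ∈ Imul k A := hf ▸ Submodule.mem_span_singleton_self f
  exact ⟨(LinearMap.toSpanSingleton (A ⊗[k] A) (Imul k A) ⟨f, hfI⟩).restrictScalars A,
    exact_Jann_subtype_toSpanSingleton hf, toSpanSingleton_Imul_surjective hf⟩

section Projective

variable [Module.Projective k A]

theorem exists_retraction_Jann (hI : (Imul k A).IsPrincipal) :
    ∃ π : A ⊗[k] A →ₗ[A] Jann k A, ∀ x : Jann k A, π x = x := by
  obtain ⟨g, hexact, hg⟩ := exists_exact_Jann_Imul hI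
  obtain ⟨π, hπ⟩ := exists_comp_eq_id_of_exact hexact Subtype.val_injective hg
  exact ⟨π, LinearMap.congr_fun hπ⟩

theorem finite_Jann [Module.Finite k A] (hI : (Imul k A).IsPrincipal) :
    Module.Finite A (Jann k A) := by
  obtain ⟨g, hexact, hg⟩ := exists_exact_Jann_Imul hI
  exact finite_of_exact_of_projective hexact Subtype.val_injective hg

theorem projective_Jann (hI : (Imul k A).IsPrincipal) : Module.Projective A (Jann k A) := by
  obtain ⟨g, hexact, hg⟩ := exists_exact_Jann_Imul hI
  exact projective_of_exact_of_projective hexact Subtype.val_injective hg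

theorem rankAtStalk_Jann [Module.Finite k A] (hI : (Imul k A).IsPrincipal)
    (p : PrimeSpectrum A) : Module.rankAtStalk (Jann k A) p = 1 := by
  have := finite_Jann hI
  have := projective_Jann hI
  have : Nontrivial A := p.nontrivial
  obtain ⟨g, hexact, hg⟩ := exists_exact_Jann_Imul hI
  have rank_mul := rankAtStalk_eq_add_of_exact (exact_Imul_subtype_lmul'' k A)
    Subtype.val_injective (lmul''_surjective k A)
  have rank_mul_generator := rankAtStalk_eq_add_of_exact hexact Subtype.val_injective hg
  have h := congrFun (rank_mul.symm.trans rank_mul_generator) p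
  simp only [Pi.add_apply, Module.rankAtStalk_self, Pi.one_apply] at h
  lia

end Projective

end Ideals

section OneTensorMap

variable {k A}

theorem apply_lid_rTensor {M N : Type*} [AddCommGroup M] [AddCommGroup N] [Module k M] [Module k N]
    (φ : Module.Dual k M) (ε : Module.Dual k N) (u : M ⊗[k] N) :
    ε (TensorProduct.lid k N (LinearMap.rTensor N φ u)) =
      φ (TensorProduct.rid k M (LinearMap.lTensor M ε u)) := by
  induction u with
  | zero => simp
  | tmul a l => simp [mul_comm]
  | add u v hu hv => simp only [map_add, hu, hv]

theorem oneTensorMap_tmul (φ : Module.Dual k A) (a b : A) :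
    oneTensorMap k A φ (a ⊗ₜ b) = φ b • a := rfl

theorem rid_lTensor_eq_oneTensorMap (φ : Module.Dual k A) (x : A ⊗[k] A) :
    TensorProduct.rid k A (LinearMap.lTensor A φ x) = oneTensorMap k A φ x := by
  induction x with
  | zero => simp
  | tmul a b => simp [oneTensorMap_tmul]
  | add x y hx hy => simp only [map_add, hx, hy]

theorem oneTensorMap_smul (φ : Module.Dual k A) (a : A) (x : A ⊗[k] A) :
    oneTensorMap k A φ (a • x) = a * oneTensorMap k A φ x := by
  induction x with
  | zero => simp
  | tmul b c => simp [oneTensorMap_tmul, TensorProduct.smul_tmul']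
  | add x y hx hy => simp only [smul_add, map_add, hx, hy, mul_add]

theorem oneTensorMap_comp_mulLeft (φ : Module.Dual k A) (a : A) (x : A ⊗[k] A) :
    oneTensorMap k A (φ ∘ₗ LinearMap.mulLeft k a) x = oneTensorMap k A φ ((1 ⊗ₜ a) * x) := by
  induction x with
  | zero => simp
  | tmul b c => simp [oneTensorMap_tmul]
  | add x y hx hy => simp only [map_add, hx, hy, mul_add]

theorem comm_one_tmul_mul (a : A) (x : A ⊗[k] A) :
    TensorProduct.comm k A A ((1 ⊗ₜ a) * x) = a • TensorProduct.comm k A A x := by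
  induction x with
  | zero => simp
  | tmul b c => simp [TensorProduct.smul_tmul']
  | add x y hx hy => simp only [mul_add, map_add, hx, hy, smul_add]

theorem dual_apply_oneTensorMap_comm (φ ψ : Module.Dual k A) (x : A ⊗[k] A) :
    φ (oneTensorMap k A ψ (TensorProduct.comm k A A x)) = ψ (oneTensorMap k A φ x) := by
  induction x with
  | zero => simp
  | tmul a b => simp [oneTensorMap_tmul, mul_comm]
  | add x y hx hy => simp only [map_add, hx, hy]

theorem one_tmul_mul_of_mem_Jann {x : A ⊗[k] A} (hx : x ∈ Jann k A) (a : A) :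
    ((1 : A) ⊗ₜ[k] a) * x = a • x := by
  have hmem : (1 : A) ⊗ₜ[k] a - a ⊗ₜ 1 ∈ Imul k A := by simp [Imul, RingHom.mem_ker]
  have hzero : x * ((1 : A) ⊗ₜ[k] a - a ⊗ₜ 1) = 0 := Submodule.mem_annihilator.mp hx _ hmem
  rw [Algebra.smul_def, Algebra.TensorProduct.algebraMap_apply, Algebra.algebraMap_self_apply]
  linear_combination hzero

theorem oneTensorMap_comp_mulLeft_of_mem_Jann {x : A ⊗[k] A} (hx : x ∈ Jann k A)
    (φ : Module.Dual k A) (a : A) :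
    oneTensorMap k A (φ ∘ₗ LinearMap.mulLeft k a) x = a * oneTensorMap k A φ x := by
  rw [oneTensorMap_comp_mulLeft, one_tmul_mul_of_mem_Jann hx, oneTensorMap_smul]

variable (k A) in
/-- The `k`-linear map `A^∨ → Hom_A(J, A)`, `φ ↦ (1 ⊗ φ)|_J`. -/
def dualRestrictJann : Module.Dual k A →ₗ[k] Jann k A →ₗ[A] A where
  toFun φ :=
    { toFun := fun x ↦ oneTensorMap k A φ x
      map_add' := fun x y ↦ map_add _ _ _
      map_smul' := fun a x ↦ oneTensorMap_smul φ a x }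
  map_add' φ ψ := by
    ext x
    simp [← rid_lTensor_eq_oneTensorMap, LinearMap.lTensor_add]
  map_smul' c φ := by
    ext x
    simp [← rid_lTensor_eq_oneTensorMap, LinearMap.lTensor_smul]

theorem dualRestrictJann_apply (φ : Module.Dual k A) (x : Jann k A) :
    dualRestrictJann k A φ x = oneTensorMap k A φ x := rfl

theorem liftBaseChange_dualTensorHom_tmul (φ : Module.Dual k A) (a : A) (x : A ⊗[k] A) :
    (dualTensorHom k A A (φ ⊗ₜ a)).liftBaseChange A x = a * oneTensorMap k A φ x := by
  induction x with
  | zero => simp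
  | tmul b c => simp [oneTensorMap_tmul, mul_comm]
  | add x y hx hy => simp only [map_add, mul_add, hx, hy]

theorem exists_dualRestrictJann_eq_liftBaseChange [Module.Finite k A] [Module.Projective k A]
    (h : A →ₗ[k] A) :
    ∃ φ : Module.Dual k A, ∀ x : Jann k A, dualRestrictJann k A φ x = h.liftBaseChange A x.1 := by
  obtain ⟨t, rfl⟩ := (dualTensorHom_bijective (R := k) (M := A) (N := A)).2 h
  induction t with
  | zero => exact ⟨0, fun x ↦ by simp⟩
  | add s t hs ht =>
    obtain ⟨φ, hφ⟩ := hs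
    obtain ⟨ψ, hψ⟩ := ht
    exact ⟨φ + ψ, fun x ↦ by simp [hφ, hψ]⟩
  | tmul φ a =>
    refine ⟨φ ∘ₗ LinearMap.mulLeft k a, fun ⟨x, hx⟩ ↦ ?_⟩
    rw [dualRestrictJann_apply, oneTensorMap_comp_mulLeft_of_mem_Jann hx,
      liftBaseChange_dualTensorHom_tmul]

theorem dualRestrictJann_surjective [Module.Finite k A] [Module.Projective k A]
    (hI : (Imul k A).IsPrincipal) : Function.Surjective (dualRestrictJann k A) := by
  intro l
  obtain ⟨π, hπ⟩ := exists_retraction_Jann hI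
  obtain ⟨φ, hφ⟩ := exists_dualRestrictJann_eq_liftBaseChange
    ((LinearMap.liftBaseChangeEquiv A).symm (l ∘ₗ π))
  refine ⟨φ, LinearMap.ext fun x ↦ ?_⟩
  rw [hφ, LinearMap.liftBaseChange, LinearEquiv.apply_symm_apply, LinearMap.comp_apply, hπ]

theorem exists_sum_oneTensorMap_eq_one [Module.Finite k A] [Module.Projective k A]
    (hI : (Imul k A).IsPrincipal) :
    ∃ (n : ℕ) (φ : Fin n → Module.Dual k A) (x : Fin n → Jann k A),
      ∑ i, oneTensorMap k A (φ i) (x i) = 1 := by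
  have := finite_Jann hI
  have := projective_Jann hI
  obtain ⟨n, l, x, h⟩ := exists_sum_dual_apply_eq_one_of_rankAtStalk_pos
    fun p ↦ (rankAtStalk_Jann hI p).symm ▸ one_pos
  choose φ hφ using dualRestrictJann_surjective hI
  refine ⟨n, fun i ↦ φ (l i), x, ?_⟩
  simpa only [← dualRestrictJann_apply, hφ] using h

theorem oneTensorMap_mul_comm_of_mem_Jann [Module.Finite k A] [Module.Projective k A]
    (hI : (Imul k A).IsPrincipal) (φ ψ : Module.Dual k A) (x y : Jann k A) :
    oneTensorMap k A φ x * oneTensorMap k A ψ y = oneTensorMap k A φ y * oneTensorMap k A ψ x := by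
  have := finite_Jann hI
  have := projective_Jann hI
  have h := dual_apply_smul_comm_of_rankAtStalk_eq_one (rankAtStalk_Jann hI)
    (dualRestrictJann k A φ) x y
  simpa only [map_smul, smul_eq_mul, dualRestrictJann_apply] using
    congrArg (dualRestrictJann k A ψ) h

theorem comp_mulLeft_oneTensorMap_comm {y : A ⊗[k] A} (hy : y ∈ Jann k A)
    (φ ψ : Module.Dual k A) :
    φ ∘ₗ LinearMap.mulLeft k (oneTensorMap k A ψ (TensorProduct.comm k A A y)) =
      ψ ∘ₗ LinearMap.mulLeft k (oneTensorMap k A φ y) := by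
  ext b
  calc φ (oneTensorMap k A ψ (TensorProduct.comm k A A y) * b)
    _ = φ (oneTensorMap k A ψ (TensorProduct.comm k A A (b • y))) := by
      rw [← one_tmul_mul_of_mem_Jann hy, comm_one_tmul_mul, oneTensorMap_smul, mul_comm]
    _ = ψ (oneTensorMap k A φ (b • y)) := dual_apply_oneTensorMap_comm φ ψ _
    _ = ψ (oneTensorMap k A φ y * b) := by rw [oneTensorMap_smul, mul_comm]

theorem oneTensorMap_mul_oneTensorMap_comm [Module.Finite k A] [Module.Projective k A]
    (hI : (Imul k A).IsPrincipal) (φ ψ : Module.Dual k A) (x y : Jann k A) :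
    oneTensorMap k A φ x * oneTensorMap k A ψ (TensorProduct.comm k A A y) =
      oneTensorMap k A φ x * oneTensorMap k A ψ y := by
  rw [oneTensorMap_mul_comm_of_mem_Jann hI, mul_comm,
    ← oneTensorMap_comp_mulLeft_of_mem_Jann x.2, comp_mulLeft_oneTensorMap_comm y.2,
    oneTensorMap_comp_mulLeft_of_mem_Jann x.2]

theorem oneTensorMap_comm_of_mem_Jann [Module.Finite k A] [Module.Projective k A]
    (hI : (Imul k A).IsPrincipal) (ψ : Module.Dual k A) (y : Jann k A) :
    oneTensorMap k A ψ (TensorProduct.comm k A A y) = oneTensorMap k A ψ y := by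
  obtain ⟨n, φ, x, h⟩ := exists_sum_oneTensorMap_eq_one hI
  rw [← one_mul (oneTensorMap k A ψ _), ← one_mul (oneTensorMap k A ψ y), ← h, Finset.sum_mul,
    Finset.sum_mul]
  exact Finset.sum_congr rfl fun i _ ↦ oneTensorMap_mul_oneTensorMap_comm hI _ _ _ _

theorem lid_rTensor_apply (φ : Module.Dual k A) (u : A ⊗[k] (Jann k A →ₗ[A] A)) (x : Jann k A) :
    TensorProduct.lid k _ (LinearMap.rTensor _ φ u) x =
      oneTensorMap k A φ (TensorProduct.comm k A A (LinearMap.lTensor A (evalAt k A x) u)) := by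
  induction u with
  | zero => simp
  | tmul a l => simp [oneTensorMap_tmul, evalAt]
  | add u v hu hv => simp only [map_add, LinearMap.add_apply, hu, hv]

end OneTensorMap

theorem stmt4_general [Module.Finite k A] [Module.Projective k A]
    (hI : (Imul k A).IsPrincipal)
    (u : A ⊗[k] (↥(Jann k A) →ₗ[A] A))
    (hu : ∀ x : ↥(Jann k A), LinearMap.lTensor A (evalAt k A x) u = (x : A ⊗[k] A)) :
    ∃ ε : (↥(Jann k A) →ₗ[A] A) →ₗ[k] k,
      (TensorProduct.rid k A) (LinearMap.lTensor A ε u) = 1 ∧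
        (∀ ε' : (↥(Jann k A) →ₗ[A] A) →ₗ[k] k,
          (TensorProduct.rid k A) (LinearMap.lTensor A ε' u) = 1 → ε' = ε) ∧
        ∀ (φ : Module.Dual k A) (l : ↥(Jann k A) →ₗ[A] A),
          (∀ x : ↥(Jann k A), l x = oneTensorMap k A φ (x : A ⊗[k] A)) → ε l = φ 1 := by
  have lid_rTensor_eq (φ : Module.Dual k A) :
      TensorProduct.lid k _ (LinearMap.rTensor _ φ u) = dualRestrictJann k A φ := by
    ext x
    rw [lid_rTensor_apply, hu, oneTensorMap_comm_of_mem_Jann hI, dualRestrictJann_apply]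
  have apply_dualRestrictJann {ε : Module.Dual k (Jann k A →ₗ[A] A)}
      (hε : TensorProduct.rid k A (LinearMap.lTensor A ε u) = 1) (φ : Module.Dual k A) :
      ε (dualRestrictJann k A φ) = φ 1 := by
    rw [← lid_rTensor_eq, apply_lid_rTensor, hε]
  obtain ⟨n, φ, x, hsum⟩ := exists_sum_oneTensorMap_eq_one hI
  let ε : Module.Dual k (Jann k A →ₗ[A] A) := ∑ i, φ i ∘ₗ evalAt k A (x i)
  have hε : TensorProduct.rid k A (LinearMap.lTensor A ε u) = 1 := by
    rw [← LinearMap.coe_lTensorHom]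
    simpa only [ε, map_sum, LinearMap.sum_apply, LinearMap.coe_lTensorHom,
      LinearMap.lTensor_comp_apply, hu, rid_lTensor_eq_oneTensorMap] using hsum
  refine ⟨ε, hε, fun ε' hε' ↦ LinearMap.ext fun l ↦ ?_, fun φ l hl ↦ ?_⟩
  · obtain ⟨φ, rfl⟩ := dualRestrictJann_surjective hI l
    rw [apply_dualRestrictJann hε', apply_dualRestrictJann hε]
  · rw [show l = dualRestrictJann k A φ from LinearMap.ext hl, apply_dualRestrictJann hε]

/-- Let `k` be a commutative ring and `A` a commutative `k`-algebra which, as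
a `k`-module, is finitely generated projective of constant rank `r`, with `I = ker(μ)` and
`J = Ann(I)` principal.  Let `u ∈ A ⊗[k] Hom_A(J, A)` be the (unique) element corresponding to
the inclusion `J ↪ A ⊗[k] A` under the map `m : A ⊗[k] Hom_A(J,A) → Hom_A(J, A ⊗[k] A)`,
`m(a ⊗ λ)(e) = a ⊗ λ(e)`; i.e. `(1 ⊗ evalAt x)(u) = x` for all `x ∈ J`.  Then there is a
unique `k`-linear map `ε : Hom_A(J, A) → k` with `(1_A ⊗ ε)(u) = 1` in `A` (after the
canonical identification `A ⊗[k] k ≅ A`), and moreover this `ε` satisfies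
`ε((1⊗φ)|_J) = φ(1)` for every `φ ∈ A^∨ = Hom_k(A, k)`. -/
theorem stmt4 (r : ℕ) [Module.Finite k A] [Module.Projective k A]
    (hrank : ∀ (p : Ideal k) [p.IsPrime],
      Nonempty (LocalizedModule p.primeCompl A ≃ₗ[Localization p.primeCompl]
        (Fin r → Localization p.primeCompl)))
    (hI : (Imul k A).IsPrincipal) (hJ : (Jann k A).IsPrincipal)
    (u : A ⊗[k] (↥(Jann k A) →ₗ[A] A))
    (hu : ∀ x : ↥(Jann k A), LinearMap.lTensor A (evalAt k A x) u = (x : A ⊗[k] A)) :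
    ∃ ε : (↥(Jann k A) →ₗ[A] A) →ₗ[k] k,
      (TensorProduct.rid k A) (LinearMap.lTensor A ε u) = 1 ∧
        (∀ ε' : (↥(Jann k A) →ₗ[A] A) →ₗ[k] k,
          (TensorProduct.rid k A) (LinearMap.lTensor A ε' u) = 1 → ε' = ε) ∧
        ∀ (φ : Module.Dual k A) (l : ↥(Jann k A) →ₗ[A] A),
          (∀ x : ↥(Jann k A), l x = oneTensorMap k A φ (x : A ⊗[k] A)) → ε l = φ 1 :=
  stmt4_general k A hI u hu

end
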